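/- arXiv:2110.15550 — 2 statements merged into one kernel-verified Lean document; each statement's English description precedes it below -/
import Mathlib

section
/- Suppose f is convex and ∇f(x_k) ≠ 0. Then for every h > 0 there exists a unique nontrivial solution η_k ≠ 0 of the scalar equation F_h(η_k; x_k) = 0, and it satisfies η_LB ≤ η_k ≤ 1. -/
open RealInnerProductSpace

/-!
Along the ray `η ↦ x - ηh∇f(x)` convexity of `f` survives, and the quadratic term
`hη²‖∇f(x)‖²` makes `η ↦ F_h(η; x)` strongly convex. A strictly convex function on the line takes
any value at most twice, and the root `η = 0` accounts for one of the two possible zeros. The other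
is located by the intermediate value theorem: `F_h(1; x) ≥ 0` is the first-order characterization
of convexity, while the quadratic upper bound for functions with `L`-Lipschitz gradient gives
`F_h(η; x) ≤ -ηh‖∇f(x)‖² (1 - (1 + Lh/2) η)`, whose right-hand side vanishes at `η_LB`.
-/

section StrictConvex

variable {𝕜 β : Type*} [Field 𝕜] [LinearOrder 𝕜] [IsStrictOrderedRing 𝕜]
  [AddCommMonoid β] [LinearOrder β] [IsOrderedAddMonoid β] [Module 𝕜 β]
  [PosSMulStrictMono 𝕜 β] {s : Set 𝕜} {φ : 𝕜 → β} {x y z : 𝕜}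

theorem lt_max_of_strictConvexOn_of_mem_Ioo (hφ : StrictConvexOn 𝕜 s φ) (hx : x ∈ s) (hz : z ∈ s)
    (hy : y ∈ Set.Ioo x z) : φ y < max (φ x) (φ z) := by
  have hxz : x < z := hy.1.trans hy.2
  exact hφ.lt_on_openSegment hx hz hxz.ne (openSegment_eq_Ioo hxz ▸ hy)

theorem eq_of_strictConvexOn_of_apply_eq (hφ : StrictConvexOn 𝕜 s φ) (hx : x ∈ s) (hy : y ∈ s)
    (hz : z ∈ s) (hyx : y ≠ x) (hzx : z ≠ x) (hφy : φ y = φ x) (hφz : φ z = φ x) : y = z := by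
  by_contra hyz
  wlog hlt : y < z generalizing y z
  · exact this hz hy hzx hyx hφz hφy (Ne.symm hyz) (lt_of_le_of_ne (not_lt.mp hlt) (Ne.symm hyz))
  rcases hyx.lt_or_gt with hyx | hxy
  · rcases hzx.lt_or_gt with hzx | hxz
    · simpa [hφy, hφz] using lt_max_of_strictConvexOn_of_mem_Ioo hφ hy hx ⟨hlt, hzx⟩
    · simpa [hφy, hφz] using lt_max_of_strictConvexOn_of_mem_Ioo hφ hy hz ⟨hyx, hxz⟩
  · simpa [hφy, hφz] using lt_max_of_strictConvexOn_of_mem_Ioo hφ hx hz ⟨hxy, hlt⟩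

end StrictConvex

section FirstOrder

variable {E F : Type*} [NormedAddCommGroup E] [NormedSpace ℝ E] [NormedAddCommGroup F]
  [NormedSpace ℝ F] {s : Set E} {x y : E}

theorem add_hasFDerivWithinAt_apply_sub_le_of_convexOn {f : E → ℝ} {f' : E →L[ℝ] ℝ}
    (hconv : ConvexOn ℝ s f) (hx : x ∈ s) (hy : y ∈ s) (hf : HasFDerivWithinAt f f' s x) :
    f x + f' (y - x) ≤ f y := by
  have hmaps : Set.MapsTo (AffineMap.lineMap x y : ℝ → E) (Set.Icc 0 1) s :=
    hconv.1.mapsTo_lineMap hx hy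
  have hconv_line : ConvexOn ℝ (Set.Icc 0 1) (f ∘ AffineMap.lineMap (k := ℝ) x y) :=
    (hconv.comp_affineMap _).subset hmaps (convex_Icc 0 1)
  have hderiv : HasDerivWithinAt (f ∘ AffineMap.lineMap (k := ℝ) x y) (f' (y - x))
      (Set.Icc 0 1) 0 :=
    hf.comp_hasDerivWithinAt_of_eq 0 AffineMap.hasDerivWithinAt_lineMap hmaps
      (AffineMap.lineMap_apply_zero x y).symm
  have hslope := hconv_line.le_slope_of_hasDerivWithinAt (by simp) (by simp) one_pos hderiv
  simp only [slope_def_field, Function.comp_apply, AffineMap.lineMap_apply_one,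
    AffineMap.lineMap_apply_zero, sub_zero, div_one] at hslope
  linarith

theorem norm_sub_sub_hasFDerivWithinAt_apply_le_of_lipschitzOnWith {f : E → F}
    {f' : E → E →L[ℝ] F} {K : NNReal} (hs : Convex ℝ s)
    (hf : ∀ z ∈ s, HasFDerivWithinAt f (f' z) s z) (hLip : LipschitzOnWith K f' s)
    (hx : x ∈ s) (hy : y ∈ s) :
    ‖f y - f x - f' x (y - x)‖ ≤ K / 2 * ‖y - x‖ ^ 2 := by
  let γ : ℝ → E := AffineMap.lineMap x y
  have hmaps : Set.MapsTo γ (Set.Icc 0 1) s := hs.mapsTo_lineMap hx hy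
  have hderiv : ∀ t ∈ Set.Icc (0 : ℝ) 1, HasDerivWithinAt
      (fun t => f (γ t) - f x - t • f' x (y - x)) ((f' (γ t) - f' x) (y - x))
      (Set.Icc 0 1) t := fun t ht => by
    have hline := (hf (γ t) (hmaps ht)).comp_hasDerivWithinAt t
      AffineMap.hasDerivWithinAt_lineMap hmaps
    simpa using! (hline.sub_const (f x)).sub ((hasDerivWithinAt_id t _).smul_const (f' x (y - x)))
  have hquad : ∀ t : ℝ, HasDerivAt (fun t => K / 2 * ‖y - x‖ ^ 2 * t ^ 2)
      (K * ‖y - x‖ ^ 2 * t) t := fun t =>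
    ((hasDerivAt_pow 2 t).const_mul _).congr_deriv (by push_cast; ring)
  have hbound : ∀ t ∈ Set.Ico (0 : ℝ) 1,
      ‖(f' (γ t) - f' x) (y - x)‖ ≤ K * ‖y - x‖ ^ 2 * t := fun t ht =>
    calc ‖(f' (γ t) - f' x) (y - x)‖
        ≤ ‖f' (γ t) - f' x‖ * ‖y - x‖ := ContinuousLinearMap.le_opNorm _ _
      _ ≤ K * ‖γ t - x‖ * ‖y - x‖ := by
        gcongr
        exact hLip.norm_sub_le (hmaps (Set.Ico_subset_Icc_self ht)) hx
      _ = K * ‖y - x‖ ^ 2 * t := by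
        simp only [γ, AffineMap.lineMap_apply_module', add_sub_cancel_right, norm_smul,
          Real.norm_of_nonneg ht.1]
        ring
  have hfence := image_norm_le_of_norm_deriv_right_le_deriv_boundary
    (fun t ht => (hderiv t ht).continuousWithinAt)
    (fun t ht => (hderiv t (Set.Ico_subset_Icc_self ht)).mono_of_mem_nhdsWithin
      (Icc_mem_nhdsGE_of_mem ht))
    (by simp [γ]) hquad hbound (Set.right_mem_Icc.mpr zero_le_one)
  simpa [γ] using hfence

end FirstOrder

section Gradient

variable {E : Type*} [NormedAddCommGroup E] [InnerProductSpace ℝ E] [CompleteSpace E]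
  {f : E → ℝ} {f' : E → E}

theorem add_inner_le_of_convexOn_of_hasGradientAt {g x : E} (hconv : ConvexOn ℝ Set.univ f)
    (hf : HasGradientAt f g x) (y : E) : f x + ⟪g, y - x⟫ ≤ f y := by
  simpa using add_hasFDerivWithinAt_apply_sub_le_of_convexOn hconv (Set.mem_univ x)
    (Set.mem_univ y) hf.hasFDerivAt.hasFDerivWithinAt

theorem le_add_inner_add_sq_of_hasGradientAt_of_lipschitzWith {K : NNReal}
    (hf : ∀ x, HasGradientAt f (f' x) x) (hLip : LipschitzWith K f') (x y : E) :
    f y ≤ f x + ⟪f' x, y - x⟫ + K / 2 * ‖y - x‖ ^ 2 := by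
  have hLip_dual : LipschitzWith K (InnerProductSpace.toDual ℝ E ∘ f') := by
    simpa using (InnerProductSpace.toDual ℝ E).lipschitz.comp hLip
  have hnorm := norm_sub_sub_hasFDerivWithinAt_apply_le_of_lipschitzOnWith convex_univ
    (fun z _ => (hf z).hasFDerivAt.hasFDerivWithinAt) hLip_dual.lipschitzOnWith
    (Set.mem_univ x) (Set.mem_univ y)
  have hle := (Real.le_norm_self _).trans hnorm
  simp only [InnerProductSpace.toDual_apply_apply] at hle
  linarith

end Gradient

/-- The residual `F_h(η; x)` of the energy balance `f(x⁺) - f(x) = -hη²‖f' x‖²` for the gradient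
step `x⁺ = x - ηh f' x`, where `f'` stands for `∇f`. -/
def dissipationResidual {E : Type*} [NormedAddCommGroup E] [NormedSpace ℝ E] (f : E → ℝ)
    (f' : E → E) (h η : ℝ) (x : E) : ℝ :=
  f (x - (η * h) • f' x) - f x + h * η ^ 2 * ‖f' x‖ ^ 2

namespace dissipationResidual

section NormedSpace

variable {E : Type*} [NormedAddCommGroup E] [NormedSpace ℝ E] {f : E → ℝ}

theorem apply_zero (f : E → ℝ) (f' : E → E) (h : ℝ) (x : E) :
    dissipationResidual f f' h 0 x = 0 := by
  simp [dissipationResidual]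

theorem continuous (hf : Continuous f) (f' : E → E) (h : ℝ) (x : E) :
    Continuous fun η => dissipationResidual f f' h η x := by
  unfold dissipationResidual
  fun_prop

theorem strongConvexOn (hconv : ConvexOn ℝ Set.univ f) (f' : E → E) (h : ℝ) (x : E) :
    StrongConvexOn Set.univ (2 * (h * ‖f' x‖ ^ 2)) fun η => dissipationResidual f f' h η x := by
  rw [strongConvexOn_iff_convex]
  have hline : ConvexOn ℝ Set.univ
      (f ∘ AffineMap.lineMap (k := ℝ) x (x - h • f' x)) := hconv.comp_affineMap _
  refine (hline.add_const (-f x)).congr fun η _ => ?_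
  have hpoint : AffineMap.lineMap x (x - h • f' x) η = x - (η * h) • f' x := by
    rw [AffineMap.lineMap_apply_module']
    module
  simp only [dissipationResidual, Pi.add_apply, Function.comp_apply, hpoint, Real.norm_eq_abs,
    sq_abs]
  ring

theorem strictConvexOn (hconv : ConvexOn ℝ Set.univ f) {f' : E → E} {h : ℝ} (hh : 0 < h) {x : E}
    (hx : f' x ≠ 0) : StrictConvexOn ℝ Set.univ fun η => dissipationResidual f f' h η x :=
  (strongConvexOn hconv f' h x).strictConvexOn (by positivity)

end NormedSpace

section Gradient

variable {E : Type*} [NormedAddCommGroup E] [InnerProductSpace ℝ E] [CompleteSpace E]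
  {f : E → ℝ} {f' : E → E}

theorem apply_one_nonneg {x : E} (hconv : ConvexOn ℝ Set.univ f) (hf : HasGradientAt f (f' x) x)
    (h : ℝ) : 0 ≤ dissipationResidual f f' h 1 x := by
  have hle := add_inner_le_of_convexOn_of_hasGradientAt hconv hf (x - (1 * h) • f' x)
  rw [sub_sub_cancel_left, inner_neg_right, real_inner_smul_right,
    real_inner_self_eq_norm_sq] at hle
  unfold dissipationResidual
  linarith

theorem le_of_lipschitzWith {K : NNReal} (hf : ∀ x, HasGradientAt f (f' x) x)
    (hLip : LipschitzWith K f') (h η : ℝ) (x : E) :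
    dissipationResidual f f' h η x ≤ -(η * h * ‖f' x‖ ^ 2 * (1 - (1 + K * h / 2) * η)) := by
  have hle := le_add_inner_add_sq_of_hasGradientAt_of_lipschitzWith hf hLip x
    (x - (η * h) • f' x)
  rw [sub_sub_cancel_left, inner_neg_right, real_inner_smul_right, real_inner_self_eq_norm_sq,
    norm_neg, norm_smul, mul_pow, Real.norm_eq_abs, sq_abs] at hle
  unfold dissipationResidual
  linarith

theorem apply_inv_nonpos {K : NNReal} (hf : ∀ x, HasGradientAt f (f' x) x)
    (hLip : LipschitzWith K f') {h : ℝ} (hh : 1 + K * h / 2 ≠ 0) (x : E) :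
    dissipationResidual f f' h (1 + K * h / 2)⁻¹ x ≤ 0 := by
  simpa [mul_inv_cancel₀ hh] using le_of_lipschitzWith hf hLip h (1 + K * h / 2)⁻¹ x

theorem exists_mem_Icc_eq_zero {K : NNReal} (hf : ∀ x, HasGradientAt f (f' x) x)
    (hLip : LipschitzWith K f') (hconv : ConvexOn ℝ Set.univ f) {h : ℝ} (hh : 0 ≤ h) (x : E) :
    ∃ η ∈ Set.Icc (1 + K * h / 2)⁻¹ 1, dissipationResidual f f' h η x = 0 := by
  have hcont : Continuous f := continuous_iff_continuousAt.mpr fun x => (hf x).continuousAt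
  have hKh : 0 ≤ K * h / 2 := by positivity
  have hle : (1 + K * h / 2)⁻¹ ≤ 1 := inv_le_one_of_one_le₀ (by linarith)
  exact intermediate_value_Icc hle (continuous hcont f' h x).continuousOn
    ⟨apply_inv_nonpos hf hLip (by positivity) x, apply_one_nonneg hconv (hf x) h⟩

end Gradient

end dissipationResidual

theorem stmt_9_general {E : Type*} [NormedAddCommGroup E] [InnerProductSpace ℝ E]
    [CompleteSpace E] {f : E → ℝ} {f' : E → E} (hf : ∀ x, HasGradientAt f (f' x) x) {K : NNReal}
    (hLip : LipschitzWith K f') (hconv : ConvexOn ℝ Set.univ f) {h : ℝ} (hh : 0 < h) {x : E}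
    (hx : f' x ≠ 0) :
    ∃ η : ℝ, (η ≠ 0 ∧ dissipationResidual f f' h η x = 0 ∧ (1 + K * h / 2)⁻¹ ≤ η ∧ η ≤ 1) ∧
      ∀ η' : ℝ, η' ≠ 0 → dissipationResidual f f' h η' x = 0 → η' = η := by
  obtain ⟨η, ⟨hη_lower, hη_upper⟩, hη_root⟩ :=
    dissipationResidual.exists_mem_Icc_eq_zero hf hLip hconv hh.le x
  have hη_ne : η ≠ 0 := (lt_of_lt_of_le (by positivity) hη_lower).ne'
  have hzero := dissipationResidual.apply_zero f f' h x
  refine ⟨η, ⟨hη_ne, hη_root, hη_lower, hη_upper⟩, fun η' hη'_ne hη'_root => ?_⟩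
  exact eq_of_strictConvexOn_of_apply_eq (dissipationResidual.strictConvexOn hconv hh hx)
    (Set.mem_univ 0) (Set.mem_univ η') (Set.mem_univ η) hη'_ne hη_ne
    (hη'_root.trans hzero.symm) (hη_root.trans hzero.symm)

/-- Unique nontrivial solution in the convex case (Theorem `thm:ubconv`). -/
theorem stmt_9 (n : ℕ) (hn : 1 ≤ n)
    (f : EuclideanSpace ℝ (Fin n) → ℝ)
    (f' : EuclideanSpace ℝ (Fin n) → EuclideanSpace ℝ (Fin n))
    (hf : ∀ x, HasGradientAt f (f' x) x)
    (L : ℝ) (hL : 0 < L)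
    (hLip : ∀ x y, ‖f' x - f' y‖ ≤ L * ‖x - y‖)
    (xstar : EuclideanSpace ℝ (Fin n)) (hstar : ∀ y, f xstar ≤ f y)
    (F : ℝ → ℝ → EuclideanSpace ℝ (Fin n) → ℝ)
    (hF : ∀ (h η : ℝ) (x : EuclideanSpace ℝ (Fin n)),
      F h η x = f (x - (η * h) • f' x) - f x + h * η ^ 2 * ‖f' x‖ ^ 2)
    (hconv : ConvexOn ℝ Set.univ f)
    (h : ℝ) (hh : 0 < h)
    (xk : EuclideanSpace ℝ (Fin n)) (hgrad : f' xk ≠ 0) :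
    ∃ ηk : ℝ, (ηk ≠ 0 ∧ F h ηk xk = 0 ∧ (1 + L * h / 2)⁻¹ ≤ ηk ∧ ηk ≤ 1) ∧
      ∀ η : ℝ, η ≠ 0 → F h η xk = 0 → η = ηk := by
  lift L to NNReal using hL.le
  obtain rfl : F = dissipationResidual f f' := funext₃ hF
  exact stmt_9_general hf (.of_dist_le_mul (by simpa only [dist_eq_norm] using hLip)) hconv hh hgrad
end

section
/- Assume f satisfies the Polyak–Łojasiewicz inequality with parameter μ > 0. Let (x_k), (η_k) satisfy the scheme with η_k > 0 for every k. Then for every k ≥ 0, f(x_k) − f⋆ ≤ exp(−8μkh/(Lh + 2)²)(f(x₀) − f⋆). -/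
open RealInnerProductSpace

/-!
Along a step `x ↦ y = x - hη ∇f(x)` the second equation of the scheme is the exact dissipation
identity `f(x) - f(y) = h η² ‖∇f(x)‖²`. The descent lemma bounds the same decrease below by
`hη(1 - Lhη/2) ‖∇f(x)‖²`, so away from critical points `η > 0` forces `η ≥ 2 / (Lh + 2)`. Hence each
step decreases `f` by at least `4h / (Lh + 2)² ‖∇f(x)‖²`, and the Polyak–Łojasiewicz inequality
turns this into a contraction of `f - f⋆` by the factor
`1 - 8μh / (Lh + 2)² ≤ exp (-8μh / (Lh + 2)²)`.
-/

open scoped NNReal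

section DescentLemma

variable {E F : Type*} [NormedAddCommGroup E] [NormedSpace ℝ E]
  [NormedAddCommGroup F] [NormedSpace ℝ F]

theorem norm_sub_sub_le_of_lipschitzWith_fderiv {f : E → F} {f' : E → E →L[ℝ] F} {L : ℝ≥0}
    (hf : ∀ x, HasFDerivAt f (f' x) x) (hLip : LipschitzWith L f') (x y : E) :
    ‖f y - f x - f' x (y - x)‖ ≤ L / 2 * ‖y - x‖ ^ 2 := by
  set v := y - x with hv
  let remainder : ℝ → F := fun t ↦ f (x + t • v) - f x - t • f' x v
  have remainder_deriv (t : ℝ) :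
      HasDerivAt remainder (f' (x + t • v) v - f' x v) t := by
    have hline : HasDerivAt (fun t : ℝ ↦ x + t • v) v t := by
      simpa using ((hasDerivAt_id t).smul_const v).const_add x
    have hlinear : HasDerivAt (fun t : ℝ ↦ t • f' x v) (f' x v) t := by
      simpa using (hasDerivAt_id t).smul_const (f' x v)
    exact (((hf _).comp_hasDerivAt t hline).sub_const (f x)).sub hlinear
  have bound_deriv (t : ℝ) :
      HasDerivAt (fun t : ℝ ↦ L / 2 * ‖v‖ ^ 2 * t ^ 2) (L * ‖v‖ ^ 2 * t) t :=
    ((hasDerivAt_pow 2 t).const_mul _).congr_deriv (by push_cast; ring)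
  have deriv_le (t : ℝ) (ht : t ∈ Set.Ico (0 : ℝ) 1) :
      ‖f' (x + t • v) v - f' x v‖ ≤ L * ‖v‖ ^ 2 * t :=
    calc ‖f' (x + t • v) v - f' x v‖
        ≤ ‖f' (x + t • v) - f' x‖ * ‖v‖ := (f' (x + t • v) - f' x).le_opNorm v
      _ ≤ L * ‖x + t • v - x‖ * ‖v‖ := by gcongr; exact hLip.norm_sub_le _ _
      _ = L * ‖v‖ ^ 2 * t := by
        rw [add_sub_cancel_left, norm_smul, Real.norm_of_nonneg ht.1]; ring
  have remainder_le := image_norm_le_of_norm_deriv_right_le_deriv_boundary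
    (fun t _ ↦ (remainder_deriv t).continuousAt.continuousWithinAt)
    (fun t _ ↦ (remainder_deriv t).hasDerivWithinAt) (by simp [remainder]) bound_deriv deriv_le
    (Set.right_mem_Icc.2 zero_le_one)
  simpa [remainder, hv] using remainder_le

end DescentLemma

variable {E : Type*} [NormedAddCommGroup E] [InnerProductSpace ℝ E]

theorem le_add_inner_add_of_lipschitzWith_gradient [CompleteSpace E] {f : E → ℝ} {f' : E → E}
    {L : ℝ≥0} (hf : ∀ x, HasGradientAt f (f' x) x) (hLip : LipschitzWith L f') (x y : E) :
    f y ≤ f x + ⟪f' x, y - x⟫ + L / 2 * ‖y - x‖ ^ 2 := by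
  have hLip_dual : LipschitzWith L (InnerProductSpace.toDual ℝ E ∘ f') := by
    simpa only [one_mul] using (InnerProductSpace.toDual ℝ E).lipschitz.comp hLip
  have hremainder := (Real.le_norm_self _).trans
    (norm_sub_sub_le_of_lipschitzWith_fderiv (fun z ↦ (hf z).hasFDerivAt) hLip_dual x y)
  rw [InnerProductSpace.toDual_apply_apply] at hremainder
  linarith

/-- One step `x ↦ y` of the gradient scheme with step size `h` and multiplier `η`, where `f'` plays
the role of `∇f`. The same scalar `η` rescales the gradient direction and the first-order prediction
of the change of `f`, which makes the scheme implicit in `η`. -/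
structure IsRelaxedGradientStep (f : E → ℝ) (f' : E → E) (h η : ℝ) (x y : E) : Prop where
  eq_sub_smul : y = x - (h * η) • f' x
  sub_eq_mul_inner : f y - f x = η * ⟪f' x, y - x⟫

namespace IsRelaxedGradientStep

variable {f : E → ℝ} {f' : E → E} {L : ℝ≥0} {h η : ℝ} {x y : E}

theorem sub_eq_neg_smul (hstep : IsRelaxedGradientStep f f' h η x y) :
    y - x = -((h * η) • f' x) := by
  rw [hstep.eq_sub_smul]; abel

theorem sub_eq_mul_norm_sq (hstep : IsRelaxedGradientStep f f' h η x y) :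
    f x - f y = h * η ^ 2 * ‖f' x‖ ^ 2 := by
  have hdecrease := hstep.sub_eq_mul_inner
  rw [hstep.sub_eq_neg_smul, inner_neg_right, real_inner_smul_right,
    real_inner_self_eq_norm_sq] at hdecrease
  linarith

variable [CompleteSpace E]

theorem two_le_multiplier_mul (hstep : IsRelaxedGradientStep f f' h η x y)
    (hf : ∀ x, HasGradientAt f (f' x) x) (hLip : LipschitzWith L f')
    (hh : 0 < h) (hη : 0 < η) (hx : f' x ≠ 0) :
    2 ≤ η * (L * h + 2) := by
  have hdescent := le_add_inner_add_of_lipschitzWith_gradient hf hLip x y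
  rw [hstep.sub_eq_neg_smul, inner_neg_right, real_inner_smul_right, real_inner_self_eq_norm_sq,
    norm_neg, norm_smul, mul_pow, Real.norm_eq_abs, sq_abs] at hdescent
  have hdissipation := hstep.sub_eq_mul_norm_sq
  have hscale : 0 < h * η * ‖f' x‖ ^ 2 := by positivity
  have hscaled : 0 ≤ h * η * ‖f' x‖ ^ 2 * (η * (L * h + 2) - 2) := by linarith
  exact sub_nonneg.1 (nonneg_of_mul_nonneg_right hscaled hscale)

theorem mul_norm_sq_le_sub (hstep : IsRelaxedGradientStep f f' h η x y)
    (hf : ∀ x, HasGradientAt f (f' x) x) (hLip : LipschitzWith L f') (hh : 0 < h) (hη : 0 < η) :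
    4 * h / (L * h + 2) ^ 2 * ‖f' x‖ ^ 2 ≤ f x - f y := by
  rw [hstep.sub_eq_mul_norm_sq]
  rcases eq_or_ne (f' x) 0 with hx | hx
  · simp [hx]
  have hη_sq : 2 ^ 2 ≤ (η * (L * h + 2)) ^ 2 := by
    gcongr
    exact hstep.two_le_multiplier_mul hf hLip hh hη hx
  gcongr
  rw [div_le_iff₀ (by positivity)]
  calc 4 * h = h * 2 ^ 2 := by ring
    _ ≤ h * (η * (L * h + 2)) ^ 2 := by gcongr
    _ = h * η ^ 2 * (L * h + 2) ^ 2 := by ring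

theorem sub_le_mul_sub {μ fstar : ℝ} (hstep : IsRelaxedGradientStep f f' h η x y)
    (hf : ∀ x, HasGradientAt f (f' x) x) (hLip : LipschitzWith L f') (hh : 0 < h) (hη : 0 < η)
    (hPL : μ * (f x - fstar) ≤ 1 / 2 * ‖f' x‖ ^ 2) :
    f y - fstar ≤ (1 - 8 * μ * h / (L * h + 2) ^ 2) * (f x - fstar) := by
  have hdecrease : 8 * μ * h / (L * h + 2) ^ 2 * (f x - fstar) ≤ f x - f y :=
    calc 8 * μ * h / (L * h + 2) ^ 2 * (f x - fstar)
        = 8 * h / (L * h + 2) ^ 2 * (μ * (f x - fstar)) := by ring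
      _ ≤ 8 * h / (L * h + 2) ^ 2 * (1 / 2 * ‖f' x‖ ^ 2) := by gcongr
      _ = 4 * h / (L * h + 2) ^ 2 * ‖f' x‖ ^ 2 := by ring
      _ ≤ f x - f y := hstep.mul_norm_sq_le_sub hf hLip hh hη
  linarith

end IsRelaxedGradientStep

theorem stmt_14_general [CompleteSpace E] {f : E → ℝ} {f' : E → E} {L : ℝ≥0} {μ h fstar : ℝ}
    (hf : ∀ x, HasGradientAt f (f' x) x) (hLip : LipschitzWith L f')
    (hfstar : ∀ y, fstar ≤ f y) (hPL : ∀ y, μ * (f y - fstar) ≤ 1 / 2 * ‖f' y‖ ^ 2) (hh : 0 < h)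
    {x : ℕ → E} {η : ℕ → ℝ} (hη : ∀ k, 0 < η k)
    (hstep : ∀ k, IsRelaxedGradientStep f f' h (η k) (x k) (x (k + 1))) (k : ℕ) :
    f (x k) - fstar ≤ Real.exp (-(8 * μ * k * h) / (L * h + 2) ^ 2) * (f (x 0) - fstar) := by
  set c := 8 * μ * h / (L * h + 2) ^ 2 with hc
  have contraction (j : ℕ) : f (x (j + 1)) - fstar ≤ Real.exp (-c) * (f (x j) - fstar) :=
    ((hstep j).sub_le_mul_sub hf hLip hh (hη j) (hPL _)).trans <|
      mul_le_mul_of_nonneg_right (Real.one_sub_le_exp_neg c) (sub_nonneg.2 (hfstar _))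
  calc f (x k) - fstar
      ≤ Real.exp (-c) ^ k * (f (x 0) - fstar) :=
        le_geom (u := fun j ↦ f (x j) - fstar) (Real.exp_nonneg _) k fun j _ ↦ contraction j
    _ = Real.exp (-(8 * μ * k * h) / (L * h + 2) ^ 2) * (f (x 0) - fstar) := by
        rw [← Real.exp_nat_mul, hc]
        ring_nf

/-- Linear rate under the PŁ inequality (Theorem `thm:LMrate3`). -/
theorem stmt_14 (n : ℕ) (hn : 1 ≤ n)
    (f : EuclideanSpace ℝ (Fin n) → ℝ)
    (f' : EuclideanSpace ℝ (Fin n) → EuclideanSpace ℝ (Fin n))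
    (hf : ∀ x, HasGradientAt f (f' x) x)
    (L : ℝ) (hL : 0 < L)
    (hLip : ∀ x y, ‖f' x - f' y‖ ≤ L * ‖x - y‖)
    (xstar : EuclideanSpace ℝ (Fin n)) (hstar : ∀ y, f xstar ≤ f y)
    (μ : ℝ) (hμ : 0 < μ)
    (hPL : ∀ y, μ * (f y - f xstar) ≤ (1/2) * ‖f' y‖ ^ 2)
    (h : ℝ) (hh : 0 < h)
    (x : ℕ → EuclideanSpace ℝ (Fin n)) (η : ℕ → ℝ) (hηpos : ∀ k, 0 < η k)
    (hscheme1 : ∀ k : ℕ, x (k + 1) = x k - (h * η k) • f' (x k))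
    (hscheme2 : ∀ k : ℕ,
      f (x (k + 1)) - f (x k) = η k * ⟪f' (x k), x (k + 1) - x k⟫) :
    ∀ k : ℕ,
      f (x k) - f xstar ≤
        Real.exp (-(8 * μ * k * h) / (L * h + 2) ^ 2) * (f (x 0) - f xstar) := by
  lift L to ℝ≥0 using hL.le
  exact stmt_14_general hf (.of_dist_le_mul <| by simpa only [dist_eq_norm] using hLip) hstar hPL hh
    hηpos fun k ↦ ⟨hscheme1 k, hscheme2 k⟩
end
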